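/- Let d ≥ 1 and let h, h' : ℝ^d → ℝ be measurable with values in [0,1]. Let β_0, β_1, γ_0, γ_1 : {1,…,d} → ℝ with β_{1,i} > 0 and γ_{1,i} > 0 for every i (sign normalization). For z_1 ∈ ℝ^d and z_2 ∈ (ℝ∖{0})^d define μ(z_1,z_2) = ∫_{ℝ^d} h(v) ∏_{i=1}^d φ(v_i/z_{2,i} − β_{0,i} − β_{1,i} z_{1,i}) / |z_{2,i}| dv, and μ'(z_1,z_2) analogously with (h', γ_0, γ_1). Suppose μ = μ' on a nonempty open set U ⊆ ℝ^d × (ℝ∖{0})^d, and for every i ∈ {1,…,d} there exist a point (z_1, z_2) ∈ U and a nonempty open interval I of values of the i-th coordinate z_{1,i} (with all other coordinates of (z_1,z_2) held fixed, staying in U) on which the map z_{1,i} ↦ μ(z_1,z_2) is neither affine nor exponential-affine. Then β_{0,i} = γ_{0,i} and β_{1,i} = γ_{1,i} for every i, and h = h' Lebesgue-almost everywhere on ℝ^d. -/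

import Mathlib

open MeasureTheory

/-- The standard normal density `φ(t) = (2π)^{-1/2} exp(-t²/2)`. -/
noncomputable def stdNormalPDF (t : ℝ) : ℝ :=
  (Real.sqrt (2 * Real.pi))⁻¹ * Real.exp (-t ^ 2 / 2)

/-- The choice probability of an excluded outcome generated by the structural
function `h` and Gaussian index coefficients `(β₀, β₁)`:
`μ(z₁,z₂) = ∫ h(v) ∏ i, φ(v i / z₂ i − β₀ i − β₁ i z₁ i) / |z₂ i| dv`. -/
noncomputable def choiceProb {d : ℕ} (h : (Fin d → ℝ) → ℝ) (β₀ β₁ : Fin d → ℝ)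
    (z₁ z₂ : Fin d → ℝ) : ℝ :=
  ∫ v : Fin d → ℝ,
    h v * ∏ i : Fin d, stdNormalPDF (v i / z₂ i - β₀ i - β₁ i * z₁ i) / |z₂ i|

lemma mi_kernel_bound {C r R c z : ℝ} (hr : 0 < r) (hc : |c| ≤ C) (h1 : r ≤ |z|) (h2 : |z| ≤ R)
    (x : ℝ) :
    (1 + (x / z - c) ^ 2) * stdNormalPDF (x / z - c) / |z| ≤
      4 / r * Real.exp (C ^ 2 / 4) * Real.exp (-(1 / (8 * R ^ 2)) * x ^ 2) := by
  have hz : 0 < |z| := lt_of_lt_of_le hr h1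
  have hR : 0 < R := lt_of_lt_of_le hz h2
  set y := x / z - c with hy
  have hx : x / z = y + c := by rw [hy]; ring
  have hcc : c ^ 2 ≤ C ^ 2 := by
    rw [← sq_abs c]; exact pow_le_pow_left₀ (abs_nonneg _) hc 2
  have hzz : z ^ 2 ≤ R ^ 2 := by
    rw [← sq_abs z]; exact pow_le_pow_left₀ (abs_nonneg _) h2 2
  have hz2 : 0 < z ^ 2 := by rw [← sq_abs z]; positivity
  have e1 : 1 / (8 * R ^ 2) * x ^ 2 ≤ (y + c) ^ 2 / 8 := by
    rw [← hx, div_pow]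
    rw [div_mul_eq_mul_div, one_mul, div_div, mul_comm (z ^ 2)]
    apply div_le_div_of_nonneg_left (sq_nonneg _) (by positivity) (by linarith)
  have e2 : (y + c) ^ 2 / 8 ≤ y ^ 2 / 4 + C ^ 2 / 4 := by nlinarith [sq_nonneg (y - c)]
  have e3 : 1 + y ^ 2 ≤ 4 * Real.exp (y ^ 2 / 4) := by
    have := Real.add_one_le_exp (y ^ 2 / 4)
    nlinarith [sq_nonneg y]
  have e4 : (Real.sqrt (2 * Real.pi))⁻¹ ≤ 1 := by
    apply inv_le_one_of_one_le₀
    rw [Real.one_le_sqrt]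
    nlinarith [Real.pi_gt_three]
  have e5 : (1 + y ^ 2) * stdNormalPDF y ≤ 4 * Real.exp (-y ^ 2 / 4) := by
    unfold stdNormalPDF
    calc (1 + y ^ 2) * ((Real.sqrt (2 * Real.pi))⁻¹ * Real.exp (-y ^ 2 / 2))
        ≤ (4 * Real.exp (y ^ 2 / 4)) * (1 * Real.exp (-y ^ 2 / 2)) := by gcongr
      _ = 4 * Real.exp (-y ^ 2 / 4) := by
        rw [one_mul, mul_assoc, ← Real.exp_add]; ring_nf
  calc (1 + y ^ 2) * stdNormalPDF y / |z| ≤ 4 * Real.exp (-y ^ 2 / 4) / r := by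
        gcongr
    _ ≤ 4 * Real.exp (C ^ 2 / 4 + -(1 / (8 * R ^ 2)) * x ^ 2) / r := by
        gcongr
        linarith
    _ = _ := by rw [Real.exp_add]; ring

lemma mi_pdf_pos (t : ℝ) : 0 < stdNormalPDF t := by
  unfold stdNormalPDF; positivity

lemma mi_pdf_meas : Measurable stdNormalPDF := by
  unfold stdNormalPDF; fun_prop

lemma mi_pdf_deriv (t : ℝ) : HasDerivAt stdNormalPDF (-t * stdNormalPDF t) t := by
  unfold stdNormalPDF
  have h1 : HasDerivAt (fun t : ℝ => -t ^ 2 / 2) (-t) t := by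
    have := ((hasDerivAt_pow 2 t).neg).div_const 2
    refine this.congr_deriv ?_
    norm_num
    ring
  convert! (h1.exp).const_mul (Real.sqrt (2 * Real.pi))⁻¹ using 1
  ring

lemma mi_dct {Ω : Type*} [MeasurableSpace Ω] {μ : Measure Ω} {w X : Ω → ℝ}
    (wm : Measurable w) (Xm : Measurable X)
    (hw : ∀ a : ℝ, 0 < a → Integrable (fun v => w v * Real.exp (-a * X v ^ 2)) μ)
    {F F' : ℝ → ℝ → ℝ} {t₀ : ℝ} {s : Set ℝ} (hs : s ∈ nhds t₀) {K K' a : ℝ} (ha : 0 < a)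
    (Fm : ∀ t, Measurable (F t)) (Fm' : ∀ t, Measurable (F' t))
    (hF : ∀ t ∈ s, ∀ x, |F t x| ≤ K * Real.exp (-a * x ^ 2))
    (hF' : ∀ t ∈ s, ∀ x, |F' t x| ≤ K' * Real.exp (-a * x ^ 2))
    (hd : ∀ t ∈ s, ∀ x, HasDerivAt (fun t => F t x) (F' t x) t) :
    Integrable (fun v => w v * F' t₀ (X v)) μ ∧
    HasDerivAt (fun t => ∫ v, w v * F t (X v) ∂μ) (∫ v, w v * F' t₀ (X v) ∂μ) t₀ := by
  have meas : ∀ {G : ℝ → ℝ}, Measurable G → AEStronglyMeasurable (fun v => w v * G (X v)) μ :=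
    fun hG => (wm.mul (hG.comp Xm)).aestronglyMeasurable
  have bd : ∀ (G : ℝ → ℝ) (K : ℝ), (∀ x, |G x| ≤ K * Real.exp (-a * x ^ 2)) → ∀ v,
      ‖w v * G (X v)‖ ≤ K * ‖w v * Real.exp (-a * X v ^ 2)‖ := by
    intro G K h v
    rw [norm_mul, norm_mul, Real.norm_eq_abs (Real.exp _), Real.abs_exp, Real.norm_eq_abs (G _)]
    calc ‖w v‖ * |G (X v)| ≤ ‖w v‖ * (K * Real.exp (-a * X v ^ 2)) := by gcongr; exact h _
      _ = _ := by ring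
  have ht₀ : t₀ ∈ s := mem_of_mem_nhds hs
  refine hasDerivAt_integral_of_dominated_loc_of_deriv_le
    (F' := fun t v => w v * F' t (X v)) (bound := fun v => K' * ‖w v * Real.exp (-a * X v ^ 2)‖)
    hs (Filter.Eventually.of_forall fun t => meas (Fm t)) ?_ (meas (Fm' t₀)) ?_ ?_ ?_
  · exact ((hw a ha).norm.const_mul K).mono' (meas (Fm t₀))
      (Filter.Eventually.of_forall (bd _ K (hF t₀ ht₀)))
  · exact Filter.Eventually.of_forall fun v t ht => bd _ K' (hF' t ht) v
  · exact (hw a ha).norm.const_mul K'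
  · exact Filter.Eventually.of_forall fun v t ht => (hd t ht (X v)).const_mul (w v)

/-- The derivatives of the scalar Gaussian kernel integral and its heat-type equation. -/
lemma mi_pde {Ω : Type*} [MeasurableSpace Ω] {μ : Measure Ω} {w X : Ω → ℝ}
    (wm : Measurable w) (Xm : Measurable X)
    (hw : ∀ a : ℝ, 0 < a → Integrable (fun v => w v * Real.exp (-a * X v ^ 2)) μ)
    (b₀ b₁ z : ℝ) (hb₁ : 0 < b₁) (hz : z ≠ 0) :
    ∃ D₁ D₂ : ℝ → ℝ, ∀ s,
      HasDerivAt (fun s => ∫ v, w v * (stdNormalPDF (X v / z - b₀ - b₁ * s) / |z|) ∂μ) (D₁ s) s ∧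
      HasDerivAt D₁ (D₂ s) s ∧
      HasDerivAt (fun z => ∫ v, w v * (stdNormalPDF (X v / z - b₀ - b₁ * s) / |z|) ∂μ)
        (((b₀ / b₁ + s) * D₁ s + D₂ s / b₁ ^ 2) / z) z := by
  set k0 : ℝ → ℝ → ℝ → ℝ := fun z s x => stdNormalPDF (x / z - b₀ - b₁ * s) / |z| with hk0
  set k1 : ℝ → ℝ → ℝ → ℝ := fun z s x =>
    (x / z - b₀ - b₁ * s) * stdNormalPDF (x / z - b₀ - b₁ * s) / |z| with hk1
  set k2 : ℝ → ℝ → ℝ → ℝ := fun z s x =>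
    ((x / z - b₀ - b₁ * s) ^ 2 - 1) * stdNormalPDF (x / z - b₀ - b₁ * s) / |z| with hk2
  have m := mi_pdf_meas
  have m0 : ∀ z s, Measurable (k0 z s) := fun z s => by simp only [hk0]; fun_prop
  have m1 : ∀ z s, Measurable (k1 z s) := fun z s => by simp only [hk1]; fun_prop
  have m2 : ∀ z s, Measurable (k2 z s) := fun z s => by simp only [hk2]; fun_prop
  -- uniform bounds
  have B : ∀ (C r R : ℝ), 0 < r → ∀ z s, |b₀ + b₁ * s| ≤ C → r ≤ |z| → |z| ≤ R → ∀ x,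
      |k0 z s x| ≤ 4 / r * Real.exp (C ^ 2 / 4) * Real.exp (-(1 / (8 * R ^ 2)) * x ^ 2) ∧
      |k1 z s x| ≤ 4 / r * Real.exp (C ^ 2 / 4) * Real.exp (-(1 / (8 * R ^ 2)) * x ^ 2) ∧
      |k2 z s x| ≤ 4 / r * Real.exp (C ^ 2 / 4) * Real.exp (-(1 / (8 * R ^ 2)) * x ^ 2) := by
    intro C r R hr z s hc h1 h2 x
    have key := mi_kernel_bound hr hc h1 h2 x
    have hy : x / z - (b₀ + b₁ * s) = x / z - b₀ - b₁ * s := by ring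
    rw [hy] at key
    simp only [hk0, hk1, hk2]
    generalize x / z - b₀ - b₁ * s = y at *
    have hp := mi_pdf_pos y
    simp only [abs_div, abs_mul, abs_abs, abs_of_pos hp]
    refine ⟨le_trans ?_ key, le_trans ?_ key, le_trans ?_ key⟩
    · gcongr
      nlinarith [sq_nonneg y]
    · gcongr
      rw [abs_le]; constructor <;> nlinarith [sq_nonneg (y - 1), sq_nonneg (y + 1)]
    · gcongr
      rw [abs_le]; constructor <;> nlinarith [sq_nonneg y]
  have hz' : 0 < |z| := abs_pos.mpr hz
  have hyd : ∀ s x, HasDerivAt (fun s => x / z - b₀ - b₁ * s) (-b₁) s := fun s x => by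
    simpa using ((hasDerivAt_id s).const_mul b₁).const_sub (x / z - b₀)
  have d0 : ∀ s x, HasDerivAt (fun s => k0 z s x) (b₁ * k1 z s x) s := fun s x => by
    have := ((mi_pdf_deriv _).comp s (hyd s x)).div_const |z|
    refine this.congr_deriv ?_
    simp only [hk1]; ring
  have d1 : ∀ s x, HasDerivAt (fun s => k1 z s x) (b₁ * k2 z s x) s := fun s x => by
    have := ((hyd s x).mul ((mi_pdf_deriv _).comp s (hyd s x))).div_const |z|
    refine this.congr_deriv ?_
    simp only [hk2, Function.comp]; ring
  have dz : ∀ s x y, y ≠ 0 → HasDerivAt (fun z => k0 z s x)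
      ((k2 y s x + (b₀ + b₁ * s) * k1 y s x) / y) y := fun s x y hy => by
    have h1 : HasDerivAt (fun z => x / z - b₀ - b₁ * s) (-x / y ^ 2) y := by
      have := (((hasDerivAt_inv hy).const_mul x).sub_const b₀).sub_const (b₁ * s)
      refine (this.congr_deriv ?_).congr_of_eventuallyEq ?_
      · field_simp
      · exact Filter.Eventually.of_forall fun z => by simp [div_eq_mul_inv]
    have h2 := ((mi_pdf_deriv _).comp y h1).div (hasDerivAt_abs hy) (abs_ne_zero.mpr hy)
    refine h2.congr_deriv ?_
    simp only [hk1, hk2, Function.comp]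
    generalize hY : x / y - b₀ - b₁ * s = Y
    have hx : x = (Y + b₀ + b₁ * s) * y := by rw [← hY]; field_simp; ring
    rcases lt_or_gt_of_ne hy with hn | hn
    · simp [abs_of_neg hn, sign_neg hn]
      rw [hx]; field_simp; ring
    · simp [abs_of_pos hn, sign_pos hn]
      rw [hx]; field_simp; ring
  have A : ∀ s, Integrable (fun v => w v * (b₁ * k1 z s (X v))) μ ∧
      HasDerivAt (fun s => ∫ v, w v * k0 z s (X v) ∂μ) (∫ v, w v * (b₁ * k1 z s (X v)) ∂μ) s ∧
      Integrable (fun v => w v * (b₁ * k2 z s (X v))) μ ∧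
      HasDerivAt (fun s => ∫ v, w v * k1 z s (X v) ∂μ) (∫ v, w v * (b₁ * k2 z s (X v)) ∂μ) s := by
    intro s₀
    have hC : ∀ s ∈ Metric.ball s₀ 1, |b₀ + b₁ * s| ≤ |b₀| + b₁ * (|s₀| + 1) := by
      intro s hs
      rw [Metric.mem_ball, Real.dist_eq] at hs
      have : |s| ≤ |s₀| + 1 := by
        have := abs_sub_abs_le_abs_sub s s₀; linarith
      calc |b₀ + b₁ * s| ≤ |b₀| + |b₁ * s| := abs_add_le _ _
        _ = |b₀| + b₁ * |s| := by rw [abs_mul, abs_of_pos hb₁]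
        _ ≤ _ := by gcongr
    have BB := fun s hs => B _ |z| |z| hz' z s (hC s hs) le_rfl le_rfl
    have hball := Metric.ball_mem_nhds s₀ (zero_lt_one (α := ℝ))
    have ha : 0 < 1 / (8 * |z| ^ 2) := by positivity
    have r1 := mi_dct (F := fun s => k0 z s) (F' := fun s x => b₁ * k1 z s x) wm Xm hw hball ha
      (m0 z) (fun s => (m1 z s).const_mul b₁) (fun s hs x => (BB s hs x).1)
      (fun s hs x => by
        rw [abs_mul, abs_of_pos hb₁]
        have := mul_le_mul_of_nonneg_left (BB s hs x).2.1 hb₁.le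
        rw [← mul_assoc] at this
        exact this) (fun s _ x => d0 s x)
    have r2 := mi_dct (F := fun s => k1 z s) (F' := fun s x => b₁ * k2 z s x) wm Xm hw hball ha
      (m1 z) (fun s => (m2 z s).const_mul b₁) (fun s hs x => (BB s hs x).2.1)
      (fun s hs x => by
        rw [abs_mul, abs_of_pos hb₁]
        have := mul_le_mul_of_nonneg_left (BB s hs x).2.2 hb₁.le
        rw [← mul_assoc] at this
        exact this) (fun s _ x => d1 s x)
    exact ⟨r1.1, r1.2, r2.1, r2.2⟩
  have pull : ∀ (b : ℝ) (f : Ω → ℝ), ∫ v, w v * (b * f v) ∂μ = b * ∫ v, w v * f v ∂μ := by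
    intro b f
    rw [← integral_const_mul]
    congr 1; ext v; ring
  refine ⟨fun s => ∫ v, w v * (b₁ * k1 z s (X v)) ∂μ,
    fun s => b₁ * ∫ v, w v * (b₁ * k2 z s (X v)) ∂μ, fun s => ⟨(A s).2.1, ?_, ?_⟩⟩
  · simp only [pull b₁ (fun v => k1 _ _ (X v))]
    exact (A s).2.2.2.const_mul b₁
  · have hsn : {y : ℝ | |z| / 2 < |y| ∧ |y| < 2 * |z|} ∈ nhds z := by
      apply IsOpen.mem_nhds
      · exact (isOpen_lt continuous_const continuous_abs).inter
          (isOpen_lt continuous_abs continuous_const)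
      · constructor <;> linarith
    set K := 4 / (|z| / 2) * Real.exp (|b₀ + b₁ * s| ^ 2 / 4) with hK
    have BB := fun y (hy : y ∈ {y : ℝ | |z| / 2 < |y| ∧ |y| < 2 * |z|}) =>
      B _ (|z| / 2) (2 * |z|) (by linarith) y s le_rfl hy.1.le hy.2.le
    have r := mi_dct (F := fun z => k0 z s)
      (F' := fun y x => (k2 y s x + (b₀ + b₁ * s) * k1 y s x) / y) wm Xm hw hsn
      (K := K) (K' := (1 + |b₀ + b₁ * s|) * K / (|z| / 2))
      (a := 1 / (8 * (2 * |z|) ^ 2)) (by positivity)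
      (fun y => m0 y s) (fun y => ((m2 y s).add ((m1 y s).const_mul _)).div_const y)
      (fun y hy x => (BB y hy x).1)
      (fun y hy x => by
        obtain ⟨_, h1, h2⟩ := BB y hy x
        set E := Real.exp (-(1 / (8 * (2 * |z|) ^ 2)) * x ^ 2) with hE
        have hy1 : |z| / 2 ≤ |y| := hy.1.le
        calc |(k2 y s x + (b₀ + b₁ * s) * k1 y s x) / y|
            = |k2 y s x + (b₀ + b₁ * s) * k1 y s x| / |y| := abs_div _ _
          _ ≤ (K * E + |b₀ + b₁ * s| * (K * E)) / (|z| / 2) := by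
            gcongr
            refine (abs_add_le _ _).trans ?_
            rw [abs_mul]
            gcongr
          _ = _ := by ring)
      (fun y hy x => dz s x y (by
        intro h0
        have := hy.1
        rw [h0, abs_zero] at this
        linarith))
    refine r.2.congr_deriv ?_
    have i1 : Integrable (fun v => w v * k1 z s (X v)) μ := by
      have := (A s).1.const_mul b₁⁻¹
      refine this.congr (Filter.Eventually.of_forall fun v => ?_)
      simp only; field_simp
    have i2 : Integrable (fun v => w v * k2 z s (X v)) μ := by
      have := (A s).2.2.1.const_mul b₁⁻¹
      refine this.congr (Filter.Eventually.of_forall fun v => ?_)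
      simp only; field_simp
    have e : ∀ v, w v * ((k2 z s (X v) + (b₀ + b₁ * s) * k1 z s (X v)) / z) =
        z⁻¹ * (w v * k2 z s (X v)) + (z⁻¹ * (b₀ + b₁ * s)) * (w v * k1 z s (X v)) := by
      intro v; field_simp
    simp only [e, pull b₁ (fun v => k1 _ _ (X v)), pull b₁ (fun v => k2 _ _ (X v))]
    rw [integral_add (i2.const_mul _) (i1.const_mul _), integral_const_mul, integral_const_mul]
    field_simp
    ring

/-- A function with zero derivative on an interval is constant there. -/
lemma mi_const {a b : ℝ} {f : ℝ → ℝ} (hf : ∀ s ∈ Set.Ioo a b, HasDerivAt f 0 s) :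
    ∃ C, ∀ s ∈ Set.Ioo a b, f s = C := by
  apply isOpen_Ioo.exists_is_const_of_fderiv_eq_zero (𝕜 := ℝ) isPreconnected_Ioo
  · exact fun s hs => (hf s hs).differentiableAt.differentiableWithinAt
  · intro s hs
    ext
    simp [(hf s hs).deriv]

lemma mi_ode {a b c₁ c₂ : ℝ} {M D₁ D₂ : ℝ → ℝ}
    (h1 : ∀ s ∈ Set.Ioo a b, HasDerivAt M (D₁ s) s)
    (h2 : ∀ s ∈ Set.Ioo a b, HasDerivAt D₁ (D₂ s) s)
    (h : ∀ s ∈ Set.Ioo a b, c₁ * D₁ s + c₂ * D₂ s = 0)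
    (hA : ¬ (∃ K₄ K₃ : ℝ, ∀ s ∈ Set.Ioo a b, M s = K₄ * s + K₃))
    (hE : ¬ (∃ K₁ K₂ K₃ : ℝ, ∀ s ∈ Set.Ioo a b, M s = K₁ * Real.exp (K₂ * s) + K₃)) :
    c₁ = 0 ∧ c₂ = 0 := by
  by_cases hc2 : c₂ = 0
  · refine ⟨?_, hc2⟩
    by_contra hc1
    apply hA
    obtain ⟨C, hC⟩ := mi_const (f := M) (a := a) (b := b) (fun s hs => by
      have := h s hs
      rw [hc2, zero_mul, add_zero] at this
      rw [← (mul_eq_zero.mp this).resolve_left hc1]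
      exact h1 s hs)
    exact ⟨0, C, fun s hs => by rw [hC s hs]; ring⟩
  exfalso
  set k := -c₁ / c₂ with hk
  have hD : ∀ s ∈ Set.Ioo a b, D₂ s = k * D₁ s := fun s hs => by
    have := h s hs
    rw [hk]; field_simp; linarith
  obtain ⟨A, hAA⟩ := mi_const (f := fun s => D₁ s - k * M s) (a := a) (b := b) (fun s hs =>
    ((h2 s hs).sub ((h1 s hs).const_mul k)).congr_deriv (by rw [hD s hs]; ring))
  by_cases hk0 : k = 0
  · apply hA
    obtain ⟨C, hC⟩ := mi_const (f := fun s => M s - A * s) (a := a) (b := b) (fun s hs => by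
      refine ((h1 s hs).sub ((hasDerivAt_id s).const_mul A)).congr_deriv ?_
      have := hAA s hs
      rw [hk0] at this
      linarith)
    exact ⟨A, C, fun s hs => by have := hC s hs; linarith⟩
  · apply hE
    obtain ⟨C, hC⟩ := mi_const (f := fun s => (M s + A / k) * Real.exp (-k * s))
      (a := a) (b := b) (fun s hs => by
      have he : HasDerivAt (fun s => Real.exp (-k * s)) (Real.exp (-k * s) * (-k)) s := by
        simpa using ((hasDerivAt_id s).const_mul (-k)).exp
      refine (((h1 s hs).add_const (A / k)).mul he).congr_deriv ?_
      have := hAA s hs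
      have h3 : D₁ s = A + k * M s := by linarith
      rw [h3]; field_simp; ring)
    refine ⟨C, k, -(A / k), fun s hs => ?_⟩
    have := hC s hs
    rw [← this, mul_assoc, ← Real.exp_add]
    simp

lemma mi_kernel_integrable (c z : ℝ) (hz : z ≠ 0) :
    Integrable (fun x : ℝ => stdNormalPDF (x / z - c) / |z|) := by
  have hz' : 0 < |z| := abs_pos.mpr hz
  have ha : 0 < 1 / (8 * |z| ^ 2) := by positivity
  have m := mi_pdf_meas
  refine ((integrable_exp_neg_mul_sq ha).const_mul (4 / |z| * Real.exp (|c| ^ 2 / 4))).mono'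
    (Measurable.aestronglyMeasurable (by fun_prop)) (Filter.Eventually.of_forall fun x => ?_)
  refine le_trans ?_ (mi_kernel_bound hz' le_rfl le_rfl le_rfl x)
  have hp := mi_pdf_pos (x / z - c)
  rw [Real.norm_eq_abs, abs_of_nonneg (by positivity)]
  gcongr
  nlinarith [sq_nonneg (x / z - c)]

lemma mi_bdd_mul {d : ℕ} {h g : (Fin d → ℝ) → ℝ} (hm : Measurable h)
    (hb : ∀ v, h v ∈ Set.Icc (0 : ℝ) 1) (hg : Integrable g) :
    Integrable (fun v => h v * g v) := by
  refine hg.norm.mono' (hm.aestronglyMeasurable.mul hg.aestronglyMeasurable)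
    (Filter.Eventually.of_forall fun v => ?_)
  rw [norm_mul, Real.norm_eq_abs (h v), abs_of_nonneg (hb v).1]
  exact mul_le_of_le_one_left (norm_nonneg _) (hb v).2

/-- The weight left after removing coordinate `i` from the Gaussian product. -/
noncomputable def miWeight {d : ℕ} (h : (Fin d → ℝ) → ℝ) (β₀ β₁ z₁ z₂ : Fin d → ℝ) (i : Fin d)
    (v : Fin d → ℝ) : ℝ :=
  h v * ∏ j ∈ Finset.univ.erase i, stdNormalPDF (v j / z₂ j - β₀ j - β₁ j * z₁ j) / |z₂ j|

lemma mi_weight_meas {d : ℕ} {h : (Fin d → ℝ) → ℝ} (hm : Measurable h)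
    (β₀ β₁ z₁ z₂ : Fin d → ℝ) (i : Fin d) : Measurable (miWeight h β₀ β₁ z₁ z₂ i) := by
  unfold miWeight
  have m := mi_pdf_meas
  refine hm.mul (Finset.measurable_prod _ fun j _ => ?_)
  fun_prop

lemma mi_weight_int {d : ℕ} {h : (Fin d → ℝ) → ℝ} (hm : Measurable h)
    (hb : ∀ v, h v ∈ Set.Icc (0 : ℝ) 1)
    (β₀ β₁ z₁ z₂ : Fin d → ℝ) (i : Fin d) (hz : ∀ j, z₂ j ≠ 0) (a : ℝ) (ha : 0 < a) :
    Integrable (fun v => miWeight h β₀ β₁ z₁ z₂ i v * Real.exp (-a * v i ^ 2)) := by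
  have key : Integrable (fun v : Fin d → ℝ => ∏ j, (if j = i then Real.exp (-a * v j ^ 2) else
      stdNormalPDF (v j / z₂ j - (β₀ j + β₁ j * z₁ j)) / |z₂ j|)) := by
    refine Integrable.fintype_prod (μ := fun _ => volume) (f := fun j x =>
      (if j = i then Real.exp (-a * x ^ 2) else
      stdNormalPDF (x / z₂ j - (β₀ j + β₁ j * z₁ j)) / |z₂ j|)) fun j => ?_
    by_cases hj : j = i
    · simpa [hj] using integrable_exp_neg_mul_sq ha
    · simpa [hj] using mi_kernel_integrable _ _ (hz j)
  refine (mi_bdd_mul hm hb key).congr (Filter.Eventually.of_forall fun v => ?_)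
  simp only [miWeight]
  rw [← Finset.mul_prod_erase Finset.univ _ (Finset.mem_univ i), if_pos rfl]
  rw [Finset.prod_congr rfl (g := fun j =>
    stdNormalPDF (v j / z₂ j - β₀ j - β₁ j * z₁ j) / |z₂ j|)]
  · ring
  · intro j hj
    rw [if_neg (Finset.ne_of_mem_erase hj), sub_sub]

lemma mi_choice_eq {d : ℕ} (h : (Fin d → ℝ) → ℝ) (β₀ β₁ z₁ z₂ : Fin d → ℝ) (i : Fin d)
    (s z : ℝ) :
    choiceProb h β₀ β₁ (Function.update z₁ i s) (Function.update z₂ i z) =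
      ∫ v, miWeight h β₀ β₁ z₁ z₂ i v * (stdNormalPDF (v i / z - β₀ i - β₁ i * s) / |z|) := by
  unfold choiceProb miWeight
  congr 1
  ext v
  rw [← Finset.mul_prod_erase Finset.univ _ (Finset.mem_univ i)]
  simp only [Function.update_self]
  rw [Finset.prod_congr rfl (g := fun j =>
    stdNormalPDF (v j / z₂ j - β₀ j - β₁ j * z₁ j) / |z₂ j|)]
  · ring
  · intro j hj
    rw [Function.update_of_ne (Finset.ne_of_mem_erase hj),
      Function.update_of_ne (Finset.ne_of_mem_erase hj)]

lemma mi_coef {d : ℕ}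
    (h h' : (Fin d → ℝ) → ℝ) (hm : Measurable h) (hm' : Measurable h')
    (hb : ∀ v, h v ∈ Set.Icc (0 : ℝ) 1) (hb' : ∀ v, h' v ∈ Set.Icc (0 : ℝ) 1)
    (β₀ β₁ γ₀ γ₁ : Fin d → ℝ)
    (hβ₁ : ∀ i, 0 < β₁ i) (hγ₁ : ∀ i, 0 < γ₁ i)
    (U : Set ((Fin d → ℝ) × (Fin d → ℝ))) (hUopen : IsOpen U)
    (hU0 : ∀ p ∈ U, ∀ i, p.2 i ≠ 0)
    (heq : ∀ p ∈ U, choiceProb h β₀ β₁ p.1 p.2 = choiceProb h' γ₀ γ₁ p.1 p.2)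
    (i : Fin d) (p : (Fin d → ℝ) × (Fin d → ℝ)) (hp : p ∈ U) (a b : ℝ)
    (hI : ∀ s ∈ Set.Ioo a b, (Function.update p.1 i s, p.2) ∈ U)
    (hA : ¬ (∃ K₄ K₃ : ℝ, ∀ s ∈ Set.Ioo a b,
          choiceProb h β₀ β₁ (Function.update p.1 i s) p.2 = K₄ * s + K₃))
    (hE : ¬ (∃ K₁ K₂ K₃ : ℝ, ∀ s ∈ Set.Ioo a b,
          choiceProb h β₀ β₁ (Function.update p.1 i s) p.2 =
            K₁ * Real.exp (K₂ * s) + K₃)) : β₀ i = γ₀ i ∧ β₁ i = γ₁ i := by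
  obtain ⟨z₁, z₂⟩ := p
  simp only at hI hA hE
  have hz := hU0 _ hp
  simp only at hz
  have Xm : Measurable (fun v : Fin d → ℝ => v i) := measurable_pi_apply i
  obtain ⟨D₁, D₂, hD⟩ := mi_pde (mi_weight_meas hm β₀ β₁ z₁ z₂ i) Xm
    (mi_weight_int hm hb β₀ β₁ z₁ z₂ i hz) (β₀ i) (β₁ i) (z₂ i) (hβ₁ i) (hz i)
  obtain ⟨E₁, E₂, hE'⟩ := mi_pde (mi_weight_meas hm' γ₀ γ₁ z₁ z₂ i) Xm
    (mi_weight_int hm' hb' γ₀ γ₁ z₁ z₂ i hz) (γ₀ i) (γ₁ i) (z₂ i) (hγ₁ i) (hz i)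
  simp only [← mi_choice_eq, Function.update_eq_self] at hD hE'
  have q1 : ∀ s ∈ Set.Ioo a b, D₁ s = E₁ s := fun s hs => by
    have hev : (fun s => choiceProb h β₀ β₁ (Function.update z₁ i s) z₂) =ᶠ[nhds s]
        (fun s => choiceProb h' γ₀ γ₁ (Function.update z₁ i s) z₂) :=
      Filter.eventuallyEq_of_mem (isOpen_Ioo.mem_nhds hs) (fun t ht => heq (Function.update z₁ i t, z₂) (hI t ht))
    exact HasDerivAt.unique (hD s).1 ((hE' s).1.congr_of_eventuallyEq hev)
  have q2 : ∀ s ∈ Set.Ioo a b, D₂ s = E₂ s := fun s hs => by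
    have hev : D₁ =ᶠ[nhds s] E₁ := Filter.eventuallyEq_of_mem (isOpen_Ioo.mem_nhds hs) q1
    exact HasDerivAt.unique (hD s).2.1 ((hE' s).2.1.congr_of_eventuallyEq hev)
  have q3 : ∀ s ∈ Set.Ioo a b, ((β₀ i / β₁ i + s) * D₁ s + D₂ s / β₁ i ^ 2) / z₂ i =
      ((γ₀ i / γ₁ i + s) * E₁ s + E₂ s / γ₁ i ^ 2) / z₂ i := fun s hs => by
    have hc : Continuous (fun z : ℝ => (Function.update z₁ i s, Function.update z₂ i z)) := by
      fun_prop
    have hn : (fun z : ℝ => (Function.update z₁ i s, Function.update z₂ i z)) ⁻¹' U ∈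
        nhds (z₂ i) := by
      apply (hUopen.preimage hc).mem_nhds
      simpa using hI s hs
    have hev : (fun z => choiceProb h β₀ β₁ (Function.update z₁ i s) (Function.update z₂ i z))
        =ᶠ[nhds (z₂ i)]
        (fun z => choiceProb h' γ₀ γ₁ (Function.update z₁ i s) (Function.update z₂ i z)) :=
      Filter.eventuallyEq_of_mem hn (fun t ht => heq (Function.update z₁ i s, Function.update z₂ i t) ht)
    exact HasDerivAt.unique (hD s).2.2 ((hE' s).2.2.congr_of_eventuallyEq hev)
  have fin := mi_ode (M := fun s => choiceProb h β₀ β₁ (Function.update z₁ i s) z₂) (c₁ := β₀ i / β₁ i - γ₀ i / γ₁ i) (c₂ := 1 / β₁ i ^ 2 - 1 / γ₁ i ^ 2)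
    (fun s _ => (hD s).1) (fun s _ => (hD s).2.1) (fun s hs => by
      have := q3 s hs
      rw [← q1 s hs, ← q2 s hs, div_left_inj' (hz i)] at this
      linear_combination this) hA hE
  obtain ⟨f1, f2⟩ := fin
  have hb1 := hβ₁ i
  have hg1 := hγ₁ i
  have e1 : β₁ i = γ₁ i := by
    have : β₁ i ^ 2 = γ₁ i ^ 2 := by
      have := sub_eq_zero.mp f2
      rw [one_div, one_div] at this
      exact inv_injective this
    exact (pow_left_inj₀ hb1.le hg1.le two_ne_zero).mp this
  refine ⟨?_, e1⟩
  rw [← e1] at f1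
  have := sub_eq_zero.mp f1
  exact (div_left_inj' hb1.ne').mp this

/-- Two finite measures whose directional moment generating functions are finite everywhere
and agree near zero are equal. -/
lemma mi_measure_ext {d : ℕ} (ν ν' : Measure (Fin d → ℝ)) [IsFiniteMeasure ν] [IsFiniteMeasure ν']
    (hi : ∀ (L : StrongDual ℝ (Fin d → ℝ)) (t : ℝ), Integrable (fun v => Real.exp (t * L v)) ν)
    (hi' : ∀ (L : StrongDual ℝ (Fin d → ℝ)) (t : ℝ), Integrable (fun v => Real.exp (t * L v)) ν')
    (he : ∀ L : StrongDual ℝ (Fin d → ℝ), ∀ᶠ t in nhds (0 : ℝ),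
      ∫ v, Real.exp (t * L v) ∂ν = ∫ v, Real.exp (t * L v) ∂ν') : ν = ν' := by
  refine Measure.ext_of_charFunDual ?_
  ext L
  have s1 : ProbabilityTheory.integrableExpSet L ν = Set.univ :=
    Set.eq_univ_of_forall fun t => hi L t
  have s2 : ProbabilityTheory.integrableExpSet L ν' = Set.univ :=
    Set.eq_univ_of_forall fun t => hi' L t
  have a1 : AnalyticOnNhd ℝ (ProbabilityTheory.mgf L ν) Set.univ := by
    have := ProbabilityTheory.analyticOnNhd_mgf (X := L) (μ := ν)
    rwa [s1, interior_univ] at this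
  have a2 : AnalyticOnNhd ℝ (ProbabilityTheory.mgf L ν') Set.univ := by
    have := ProbabilityTheory.analyticOnNhd_mgf (X := L) (μ := ν')
    rwa [s2, interior_univ] at this
  have hmgf : ProbabilityTheory.mgf L ν = ProbabilityTheory.mgf L ν' :=
    a1.eq_of_eventuallyEq a2 (he L)
  have h0 : ν = 0 ↔ ν' = 0 := by
    have := congrFun hmgf 0
    simp only [ProbabilityTheory.mgf_zero'] at this
    rw [← Measure.measure_univ_eq_zero, ← Measure.measure_univ_eq_zero,
      ← measureReal_eq_zero_iff, ← measureReal_eq_zero_iff, this]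
  have := ProbabilityTheory.eqOn_complexMGF_of_mgf' hmgf h0
  rw [s1, interior_univ] at this
  have h1 := this (show Complex.I ∈ {z : ℂ | z.re ∈ Set.univ} from trivial)
  simp only [ProbabilityTheory.complexMGF] at h1
  rw [charFunDual_apply, charFunDual_apply]
  simpa [mul_comm] using h1

lemma mi_dual (d : ℕ) (L : StrongDual ℝ (Fin d → ℝ)) (v : Fin d → ℝ) :
    L v = ∑ i, L (Pi.single i 1) * v i := by
  conv_lhs => rw [pi_eq_sum_univ' v]
  simp [mul_comm]

lemma mi_tilt {d : ℕ} (L : StrongDual ℝ (Fin d → ℝ)) (β₀ β₁ z₁ z₂ : Fin d → ℝ)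
    (hβ : ∀ i, 0 < β₁ i) (hz : ∀ i, z₂ i ≠ 0) (t : ℝ) :
    ∃ K : ℝ, K ≠ 0 ∧ ∀ v : Fin d → ℝ,
      ∏ i, stdNormalPDF (v i / z₂ i - β₀ i -
        β₁ i * (z₁ i + t * (L (Pi.single i 1) * z₂ i / β₁ i))) / |z₂ i| =
      K * ((∏ i, stdNormalPDF (v i / z₂ i - β₀ i - β₁ i * z₁ i) / |z₂ i|) *
        Real.exp (t * L v)) := by
  set l : Fin d → ℝ := fun i => L (Pi.single i 1) with hl
  refine ⟨∏ i, Real.exp (-(t * l i * z₂ i * (β₀ i + β₁ i * z₁ i)) - (t * l i * z₂ i) ^ 2 / 2),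
    Finset.prod_ne_zero_iff.mpr fun i _ => (Real.exp_pos _).ne', fun v => ?_⟩
  rw [mi_dual, Finset.mul_sum, Real.exp_sum, ← Finset.prod_mul_distrib, ← Finset.prod_mul_distrib]
  refine Finset.prod_congr rfl fun i _ => ?_
  have hbi := (hβ i).ne'
  have hzi := hz i
  have e : ∀ A B : ℝ, stdNormalPDF A = stdNormalPDF B * Real.exp ((B ^ 2 - A ^ 2) / 2) := by
    intro A B
    unfold stdNormalPDF
    rw [mul_assoc, ← Real.exp_add]
    ring_nf
  rw [e _ (v i / z₂ i - β₀ i - β₁ i * z₁ i)]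
  rw [mul_comm (Real.exp (-_ - _)), mul_assoc, ← Real.exp_add, mul_div_right_comm]
  congr 2
  change _ = t * (l i * v i) + _
  field_simp
  ring

lemma mi_gauss_int {d : ℕ} (β₀ β₁ z₁ z₂ : Fin d → ℝ) (hz : ∀ j, z₂ j ≠ 0) :
    Integrable (fun v : Fin d → ℝ =>
      ∏ i, stdNormalPDF (v i / z₂ i - β₀ i - β₁ i * z₁ i) / |z₂ i|) := by
  simp only [sub_sub]
  exact Integrable.fintype_prod (μ := fun _ => volume) (f := fun j x =>
      stdNormalPDF (x / z₂ j - (β₀ j + β₁ j * z₁ j)) / |z₂ j|)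
      fun j => mi_kernel_integrable _ _ (hz j)

lemma mi_h {d : ℕ}
    (h h' : (Fin d → ℝ) → ℝ) (hm : Measurable h) (hm' : Measurable h')
    (hb : ∀ v, h v ∈ Set.Icc (0 : ℝ) 1) (hb' : ∀ v, h' v ∈ Set.Icc (0 : ℝ) 1)
    (β₀ β₁ : Fin d → ℝ) (hβ₁ : ∀ i, 0 < β₁ i)
    (U : Set ((Fin d → ℝ) × (Fin d → ℝ))) (hUopen : IsOpen U)
    (hU0 : ∀ p ∈ U, ∀ i, p.2 i ≠ 0)
    (heq : ∀ p ∈ U, choiceProb h β₀ β₁ p.1 p.2 = choiceProb h' β₀ β₁ p.1 p.2)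
    (z₁ z₂ : Fin d → ℝ) (hp : (z₁, z₂) ∈ U) : h =ᵐ[volume] h' := by
  have hz : ∀ i, z₂ i ≠ 0 := hU0 _ hp
  set g : (Fin d → ℝ) → ℝ := fun v =>
    ∏ i, stdNormalPDF (v i / z₂ i - β₀ i - β₁ i * z₁ i) / |z₂ i| with hg
  have gpos : ∀ v, 0 < g v := fun v => Finset.prod_pos fun i _ =>
    div_pos (mi_pdf_pos _) (abs_pos.mpr (hz i))
  have gm : Measurable g := by
    have m := mi_pdf_meas
    refine Finset.measurable_prod _ fun j _ => ?_
    fun_prop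
  have gi : Integrable g := mi_gauss_int β₀ β₁ z₁ z₂ hz
  have tilt : ∀ (L : StrongDual ℝ (Fin d → ℝ)) (t : ℝ), Integrable (fun v => g v * Real.exp (t * L v)) := by
    intro L t
    obtain ⟨K, hK, hKe⟩ := mi_tilt L β₀ β₁ z₁ z₂ hβ₁ hz t
    have := (mi_gauss_int β₀ β₁ (fun i => z₁ i + t * (L (Pi.single i 1) * z₂ i / β₁ i)) z₂ hz)
    simp only [hKe] at this
    refine (this.const_mul K⁻¹).congr (Filter.Eventually.of_forall fun v => ?_)
    simp only [hg]
    rw [inv_mul_cancel_left₀ hK]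
  -- integration against the measures with density `h * g`
  have dens : ∀ f : (Fin d → ℝ) → ℝ, Measurable f → (∀ v, f v ∈ Set.Icc (0 : ℝ) 1) →
      Measurable (fun v => ENNReal.ofReal (f v * g v)) ∧
      ∫⁻ v, ENNReal.ofReal (f v * g v) ≠ ⊤ ∧
      (∀ L : StrongDual ℝ (Fin d → ℝ), ∀ t : ℝ, Integrable (fun v => Real.exp (t * L v))
        (volume.withDensity fun v => ENNReal.ofReal (f v * g v))) ∧
      (∀ L : StrongDual ℝ (Fin d → ℝ), ∀ t : ℝ, ∫ v, Real.exp (t * L v)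
        ∂(volume.withDensity fun v => ENNReal.ofReal (f v * g v)) =
        ∫ v, f v * (g v * Real.exp (t * L v))) := by
    intro f fm fb
    have fgm : Measurable (fun v => ENNReal.ofReal (f v * g v)) := (fm.mul gm).ennreal_ofReal
    have fg0 : ∀ v, 0 ≤ f v * g v := fun v => mul_nonneg (fb v).1 (gpos v).le
    refine ⟨fgm, ?_, fun L t => ?_, fun L t => ?_⟩
    · exact (mi_bdd_mul fm fb gi).lintegral_lt_top.ne
    · rw [integrable_withDensity_iff fgm (Filter.Eventually.of_forall fun v => ENNReal.ofReal_lt_top)]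
      refine (mi_bdd_mul fm fb (tilt L t)).congr (Filter.Eventually.of_forall fun v => ?_)
      simp only [ENNReal.toReal_ofReal (fg0 v)]
      ring
    · rw [integral_withDensity_eq_integral_toReal_smul fgm
        (Filter.Eventually.of_forall fun v => ENNReal.ofReal_lt_top)]
      congr 1
      ext v
      rw [ENNReal.toReal_ofReal (fg0 v), smul_eq_mul, mul_assoc]
  obtain ⟨d1, d2, d3, d4⟩ := dens h hm hb
  obtain ⟨d1', d2', d3', d4'⟩ := dens h' hm' hb'
  have : IsFiniteMeasure (volume.withDensity fun v => ENNReal.ofReal (h v * g v)) :=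
    isFiniteMeasure_withDensity d2
  have : IsFiniteMeasure (volume.withDensity fun v => ENNReal.ofReal (h' v * g v)) :=
    isFiniteMeasure_withDensity d2'
  have hmeq := mi_measure_ext _ _ d3 d3' (fun L => by
    have hc : Continuous (fun t : ℝ =>
        ((fun i => z₁ i + t * (L (Pi.single i 1) * z₂ i / β₁ i), z₂) :
          (Fin d → ℝ) × (Fin d → ℝ))) := by fun_prop
    have : (fun t : ℝ => ((fun i => z₁ i + t * (L (Pi.single i 1) * z₂ i / β₁ i), z₂) :
          (Fin d → ℝ) × (Fin d → ℝ))) ⁻¹' U ∈ nhds (0 : ℝ) := by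
      apply (hUopen.preimage hc).mem_nhds
      simpa using hp
    filter_upwards [this] with t ht
    obtain ⟨K, hK, hKe⟩ := mi_tilt L β₀ β₁ z₁ z₂ hβ₁ hz t
    have e := heq _ ht
    simp only [choiceProb, hKe] at e
    rw [d4, d4']
    have pull : ∀ f : (Fin d → ℝ) → ℝ, ∫ v, f v * (K * (g v * Real.exp (t * L v))) =
        K * ∫ v, f v * (g v * Real.exp (t * L v)) := by
      intro f
      rw [← integral_const_mul]
      congr 1; ext v; ring
    exact mul_left_cancel₀ hK ((pull h).symm.trans (e.trans (pull h'))))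
  have hae := (withDensity_eq_iff d1.aemeasurable d1'.aemeasurable d2).mp hmeq
  filter_upwards [hae] with v hv
  rw [ENNReal.ofReal_eq_ofReal_iff (mul_nonneg (hb v).1 (gpos v).le)
    (mul_nonneg (hb' v).1 (gpos v).le)] at hv
  exact mul_right_cancel₀ (gpos v).ne' hv

/-- Proposition 2 in structural form: with a `d`-dimensional
Gaussian index, positive (normalized) slopes, equality of generated choice
probabilities on a nonempty open set, and the non-affine/non-exponential
condition in each coordinate, both the coefficients and the structural function
`h` are identified. -/
theorem multivariate_identification
    {d : ℕ} (hd : 1 ≤ d)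
    (h h' : (Fin d → ℝ) → ℝ) (hm : Measurable h) (hm' : Measurable h')
    (hb : ∀ v, h v ∈ Set.Icc (0 : ℝ) 1) (hb' : ∀ v, h' v ∈ Set.Icc (0 : ℝ) 1)
    (β₀ β₁ γ₀ γ₁ : Fin d → ℝ)
    (hβ₁ : ∀ i, 0 < β₁ i) (hγ₁ : ∀ i, 0 < γ₁ i)
    (U : Set ((Fin d → ℝ) × (Fin d → ℝ))) (hUopen : IsOpen U) (hUne : U.Nonempty)
    (hU0 : ∀ p ∈ U, ∀ i, p.2 i ≠ 0)
    (heq : ∀ p ∈ U, choiceProb h β₀ β₁ p.1 p.2 = choiceProb h' γ₀ γ₁ p.1 p.2)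
    (hnl : ∀ i : Fin d, ∃ p ∈ U, ∃ a b : ℝ, a < b ∧
      (∀ s ∈ Set.Ioo a b, (Function.update p.1 i s, p.2) ∈ U) ∧
      ¬ (∃ K₄ K₃ : ℝ, ∀ s ∈ Set.Ioo a b,
          choiceProb h β₀ β₁ (Function.update p.1 i s) p.2 = K₄ * s + K₃) ∧
      ¬ (∃ K₁ K₂ K₃ : ℝ, ∀ s ∈ Set.Ioo a b,
          choiceProb h β₀ β₁ (Function.update p.1 i s) p.2 =
            K₁ * Real.exp (K₂ * s) + K₃)) :
    (∀ i, β₀ i = γ₀ i ∧ β₁ i = γ₁ i) ∧ h =ᵐ[volume] h' := by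
  have hcoef : ∀ i, β₀ i = γ₀ i ∧ β₁ i = γ₁ i := by
    intro i
    obtain ⟨p, hp, a, b, _, hI, hA, hE⟩ := hnl i
    exact mi_coef h h' hm hm' hb hb' β₀ β₁ γ₀ γ₁ hβ₁ hγ₁ U hUopen hU0 heq i p hp a b hI hA hE
  refine ⟨hcoef, ?_⟩
  have e0 : β₀ = γ₀ := funext fun i => (hcoef i).1
  have e1 : β₁ = γ₁ := funext fun i => (hcoef i).2
  subst e0 e1
  obtain ⟨⟨z₁, z₂⟩, hp⟩ := hUne
  exact mi_h h h' hm hm' hb hb' β₀ β₁ hβ₁ U hUopen hU0 heq z₁ z₂ hp
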